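/- arXiv:2512.21884 — 6 statements merged into one kernel-verified Lean document; each statement's English description precedes it below -/
import Mathlib

section
/- Let L ≥ 1 and consider a routing path i_0, i_1, …, i_{n+1} equipped with a block placement (a, m) whose source satisfies a_{i_0} = 0, m_{i_0} = 1 and whose destination satisfies a_{i_{n+1}} = L + 1, m_{i_{n+1}} = 1. Then the path is feasible (i.e., every interval of processed blocks [a_{i_{k−1}} + m_{i_{k−1}}, a_{i_k} + m_{i_k} − 1] is nonempty, is contained in the processing node's hosted range {a_{i_k}, …, a_{i_k} + m_{i_k} − 1}, and the concatenation of these intervals in path order is exactly the full block sequence 1, 2, …, L) if and only if the chain-feasibility condition a_{i_k} ≤ a_{i_{k−1}} + m_{i_{k−1}} ≤ a_{i_k} + m_{i_k} − 1 holds for every k = 1, …, n+1. -/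
/-!
Write `e k = a (i k) + m (i k)` for the block just after those hosted by node `i k`, so `e 0 = 1`.
Node `i k` processes the half-open interval `[e (k - 1), e k)`, and consecutive intervals share
endpoints, so whenever `e` is increasing their concatenation telescopes to `[1, e n)`
(`flatten_range'_telescope`). Hence the concatenation is `1, …, L` exactly when `e n = L + 1`, which
is the chain condition at the destination; at an intermediate node, the interval being nonempty and
contained in the hosted range is the chain condition there.
-/

/-- Adjacent intervals `[e (k - 1), e k)` for `k = 1, …, n` concatenate to `[e 0, e n)`. -/
theorem flatten_range'_telescope (e : ℕ → ℕ) (n : ℕ)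
    (h : ∀ k, 1 ≤ k → k ≤ n → e (k - 1) ≤ e k) :
    e 0 ≤ e n ∧
      ((List.range' 1 n).map (fun k => List.range' (e (k - 1)) (e k - e (k - 1)))).flatten
        = List.range' (e 0) (e n - e 0) := by
  induction n with
  | zero => simp
  | succ n ih =>
    obtain ⟨h0, ih⟩ := ih fun k h1 h2 => h k h1 (by omega)
    have hn := h (n + 1) (by omega) le_rfl
    rw [Nat.add_sub_cancel] at hn
    refine ⟨h0.trans hn, ?_⟩
    rw [List.range'_1_concat, List.map_append, List.flatten_append, ih]
    have hs : e (n + 1) - e 0 = (e n - e 0) + (e (n + 1) - e n) := by omega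
    have he : e n = e 0 + (e n - e 0) := by omega
    rw [hs, ← List.range'_append_1, ← he]
    simp [Nat.add_comm 1 n]

/-- Lemma 1, chain feasibility.
For an LLM with `L ≥ 1` blocks, a routing path `i 0, i 1, …, i (n+1)` with block
placement `(a, m)` (each node `j` hosting blocks `{a j, …, a j + m j - 1}`, `m j ≥ 1`),
dummy source (`a = 0`, `m = 1`) and dummy destination (`a = L + 1`, `m = 1`), is feasible
(every processed-block interval `[a (i (k-1)) + m (i (k-1)), a (i k) + m (i k) - 1]` at the
servers `k = 1, …, n` is nonempty and contained in the hosted range of node `i k`, and their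
concatenation in path order is exactly the block sequence `1, …, L`) if and only if the
chain-feasibility condition
`a (i k) ≤ a (i (k-1)) + m (i (k-1)) ≤ a (i k) + m (i k) - 1` holds for all `k = 1, …, n+1`. -/
theorem stmt0 {V : Type*} (L n : ℕ) (hL : 1 ≤ L)
    (a m : V → ℕ) (hm : ∀ j, 1 ≤ m j)
    (i : ℕ → V)
    (hsrc_a : a (i 0) = 0) (hsrc_m : m (i 0) = 1)
    (hdst_a : a (i (n + 1)) = L + 1) (hdst_m : m (i (n + 1)) = 1) :
    ((∀ k, 1 ≤ k → k ≤ n →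
        (a (i (k - 1)) + m (i (k - 1)) ≤ a (i k) + m (i k) - 1 ∧
         Finset.Icc (a (i (k - 1)) + m (i (k - 1))) (a (i k) + m (i k) - 1) ⊆
           Finset.Icc (a (i k)) (a (i k) + m (i k) - 1))) ∧
      ((List.range' 1 n).map (fun k =>
          List.range' (a (i (k - 1)) + m (i (k - 1)))
            ((a (i k) + m (i k)) - (a (i (k - 1)) + m (i (k - 1)))))).flatten
        = List.range' 1 L)
    ↔ (∀ k, 1 ≤ k → k ≤ n + 1 →
        a (i k) ≤ a (i (k - 1)) + m (i (k - 1)) ∧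
        a (i (k - 1)) + m (i (k - 1)) ≤ a (i k) + m (i k) - 1) := by
  have he0 : a (i 0) + m (i 0) = 1 := by omega
  have key := flatten_range'_telescope (fun k => a (i k) + m (i k)) n
  simp only [he0] at key
  constructor
  · rintro ⟨h, hcat⟩ k hk1 hk
    rcases Nat.lt_or_ge n k with hlt | hle
    · obtain rfl : k = n + 1 := by omega
      obtain ⟨h1, hflat⟩ := key fun k h1 h2 => by have := (h k h1 h2).1; omega
      -- Comparing lengths of the two descriptions of the concatenation gives `e n = L + 1`.
      have hlen := congrArg List.length (hflat.symm.trans hcat)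
      simp only [List.length_range'] at hlen
      rw [Nat.add_sub_cancel]
      omega
    · obtain ⟨hne, hsub⟩ := h k hk1 hle
      exact ⟨(Finset.mem_Icc.1 (hsub (Finset.left_mem_Icc.2 hne))).1, hne⟩
  · intro h
    refine ⟨fun k h1 h2 => ?_, ?_⟩
    · obtain ⟨ha, hb⟩ := h k h1 (by omega)
      exact ⟨hb, Finset.Icc_subset_Icc_left ha⟩
    · obtain ⟨h1, hflat⟩ := key fun k h1 h2 => by
        have := (h k h1 (by omega)).2
        omega
      rw [hflat]
      have hd := h (n + 1) (by omega) le_rfl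
      rw [Nat.add_sub_cancel] at hd
      congr 1
      omega
end

section
/- Let L ≥ 1 and K ≥ 1, and let m_1, …, m_K be natural numbers with 1 ≤ m_j ≤ L for all j, Σ_{j=1}^{K} m_j ≥ L, and Σ_{j=1}^{K−1} m_j < L. Define the block placement a_k := Σ_{j=1}^{k−1} m_j + 1 for k = 1, …, K−1 and a_K := L − m_K + 1, together with dummy source node 0 with a_0 = 0, m_0 = 1 and dummy destination node K+1 with a_{K+1} = L + 1, m_{K+1} = 1. Then the path 0, 1, 2, …, K, K+1 satisfies the chain-feasibility condition a_k ≤ a_{k−1} + m_{k−1} ≤ a_k + m_k − 1 for every k = 1, …, K+1; i.e., under the conservative greedy block placement, routing any request through the chain of servers 1, …, K is feasible. -/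
/-!
For `1 ≤ k ≤ K`, the first block not yet processed on reaching node `k` is
`a (k-1) + m (k-1) = ∑_{j=1}^{k-1} m j + 1`, because the nodes before `K` are packed contiguously.
If `k < K` this number is `a k` itself. If `k = K`, it is at least `a K = L - m K + 1` because the
total capacity is at least `L`, and at most `L` because the first `K-1` nodes have capacity below
`L`. Finally, node `K` ends exactly at block `L`.
-/

/-- chain feasibility of the conservative greedy block placement.
Let `L ≥ 1`, `K ≥ 1`, and let `m 1, …, m K` satisfy `1 ≤ m j ≤ L`,
`∑_{j=1}^K m j ≥ L`, `∑_{j=1}^{K-1} m j < L`. Define the block placement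
`a k = ∑_{j=1}^{k-1} m j + 1` for `k = 1, …, K-1`, `a K = L - m K + 1`, together with dummy
source node `0` (`a 0 = 0`, `m 0 = 1`) and dummy destination node `K+1`
(`a (K+1) = L + 1`, `m (K+1) = 1`). Then the path `0, 1, …, K, K+1` satisfies the
chain-feasibility condition `a k ≤ a (k-1) + m (k-1) ≤ a k + m k - 1` for all
`k = 1, …, K+1`. -/
theorem stmt7 (L K : ℕ) (hL : 1 ≤ L) (hK : 1 ≤ K)
    (a m : ℕ → ℕ)
    (hm : ∀ j, 1 ≤ j → j ≤ K → 1 ≤ m j ∧ m j ≤ L)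
    (hsum : L ≤ ∑ j ∈ Finset.Icc 1 K, m j)
    (hsum' : ∑ j ∈ Finset.Icc 1 (K - 1), m j < L)
    (ha : ∀ k, 1 ≤ k → k < K → a k = (∑ j ∈ Finset.Icc 1 (k - 1), m j) + 1)
    (haK : a K = L - m K + 1)
    (ha0 : a 0 = 0) (hm0 : m 0 = 1)
    (haK1 : a (K + 1) = L + 1) (hmK1 : m (K + 1) = 1) :
    ∀ k, 1 ≤ k → k ≤ K + 1 →
      a k ≤ a (k - 1) + m (k - 1) ∧
      a (k - 1) + m (k - 1) ≤ a k + m k - 1 := by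
  have hend : ∀ k, 1 ≤ k → k ≤ K →
      a (k - 1) + m (k - 1) = (∑ j ∈ Finset.Icc 1 (k - 1), m j) + 1 := by
    intro k hk hkK
    obtain ⟨n, rfl⟩ : ∃ n, k = n + 1 := ⟨k - 1, by omega⟩
    simp only [Nat.add_sub_cancel]
    rcases n with _ | n
    · simp [ha0, hm0]
    · rw [ha (n + 1) (by omega) (by omega), Finset.sum_Icc_succ_top (by omega),
        Nat.add_sub_cancel]
      omega
  have hsplit : ∑ j ∈ Finset.Icc 1 K, m j = ∑ j ∈ Finset.Icc 1 (K - 1), m j + m K := by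
    obtain ⟨n, rfl⟩ : ∃ n, K = n + 1 := ⟨K - 1, by omega⟩
    rw [Finset.sum_Icc_succ_top (by omega), Nat.add_sub_cancel]
  have hmK := hm K hK le_rfl
  intro k hk hkK
  rcases Nat.lt_trichotomy k K with h | rfl | h
  · have h1 := hend k hk h.le
    have h2 := ha k hk h
    have h3 := hm k hk h.le
    omega
  · have h1 := hend k hk le_rfl
    omega
  · obtain rfl : k = K + 1 := by omega
    rw [Nat.add_sub_cancel]
    omega
end

section
/- (Theorem on the guaranteed inference time of CG-BPRR.) Let L ≥ 1 and K ≥ 1, let m_1, …, m_K be natural numbers with 1 ≤ m_j ≤ L, Σ_{j=1}^{K} m_j ≥ L and Σ_{j=1}^{K−1} m_j < L, let τ_j ≥ 0, t_{*j} ≥ 0 be reals, \tilde t_j := τ_j + t_{*j}/m_j, and let t_{cj} be reals with 0 ≤ t_{cj} ≤ t_{*j} for all j. Consider the block placement a_k := Σ_{j=1}^{k−1} m_j + 1 for k < K and a_K := L − m_K + 1, with dummy source (a = 0, m = 1) and dummy destination (a = L + 1, m = 1). Then there exists a chain-feasible routing path — namely the chain through servers 1, 2, …, K — whose per-token inference time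 Σ over traversed servers j of (t_{cj} + τ_j · (number of blocks processed at j)) is at most Σ_{j=1}^{K} \tilde t_j m_j − τ_K (Σ_{j=1}^{K} m_j − L); hence the minimum per-token inference time over all chain-feasible routing paths for client c is at most this bound. -/
/-!
Along the chain `0, 1, …, K, K + 1` the first unprocessed block after server `k` is `a k + m k`,
which is `(∑_{j ≤ k} m j) + 1` for `k < K` and `L + 1` for `k = K`. Hence each server `k < K`
processes all of its `m k` blocks, while server `K` processes only the remaining
`L - ∑_{j < K} m j`, which is `(∑_{j ≤ K} m j) - L` fewer than `m K`; this saving is the term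
subtracted in the bound. Chain-feasibility follows from `m k ≥ 1` and the two conditions on the
sums, and the time bound holds term by term because `(τ j + tstar j / m j) * m j = τ j * m j + tstar j`.
-/

/-- Theorem 2: guaranteed inference time of CG-BPRR.
Under the conservative greedy block placement (`a k = ∑_{j<k} m j + 1` for `k < K`,
`a K = L - m K + 1`, dummy source node `0` with `a = 0, m = 1`, dummy destination node
`K+1` with `a = L + 1, m = 1`), with `1 ≤ m j ≤ L`, `∑_{j=1}^K m j ≥ L`,
`∑_{j=1}^{K-1} m j < L`, server times `τ j ≥ 0`, `0 ≤ tc j ≤ tstar j`, and amortized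
inference times `t̃ j = τ j + tstar j / m j`, there exists a chain-feasible routing path
(namely the chain through servers `1, …, K`) whose per-token inference time
`∑_k (tc (i k) + τ (i k) * (#blocks processed at i k))` is at most
`∑_{j=1}^K t̃ j * m j - τ K * (∑_{j=1}^K m j - L)`; hence the minimum per-token inference
time over all chain-feasible routing paths is at most this bound. -/
theorem stmt8 (L K : ℕ) (hL : 1 ≤ L) (hK : 1 ≤ K)
    (τ tstar tc : ℕ → ℝ) (m a : ℕ → ℕ)
    (hτ : ∀ j, 1 ≤ j → j ≤ K → 0 ≤ τ j)
    (htstar : ∀ j, 1 ≤ j → j ≤ K → 0 ≤ tstar j)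
    (htc : ∀ j, 1 ≤ j → j ≤ K → 0 ≤ tc j ∧ tc j ≤ tstar j)
    (hm : ∀ j, 1 ≤ j → j ≤ K → 1 ≤ m j ∧ m j ≤ L)
    (hsum : L ≤ ∑ j ∈ Finset.Icc 1 K, m j)
    (hsum' : ∑ j ∈ Finset.Icc 1 (K - 1), m j < L)
    (ha : ∀ k, 1 ≤ k → k < K → a k = (∑ j ∈ Finset.Icc 1 (k - 1), m j) + 1)
    (haK : a K = L - m K + 1)
    (ha0 : a 0 = 0) (hm0 : m 0 = 1)
    (haK1 : a (K + 1) = L + 1) (hmK1 : m (K + 1) = 1) :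
    ∃ (n : ℕ) (i : ℕ → ℕ),
      i 0 = 0 ∧ i (n + 1) = K + 1 ∧
      (∀ k, 1 ≤ k → k ≤ n → 1 ≤ i k ∧ i k ≤ K) ∧
      (∀ k, 1 ≤ k → k ≤ n + 1 →
        a (i k) ≤ a (i (k - 1)) + m (i (k - 1)) ∧
        a (i (k - 1)) + m (i (k - 1)) ≤ a (i k) + m (i k) - 1) ∧
      (∑ k ∈ Finset.Icc 1 n,
          (tc (i k) + τ (i k) *
            ((((a (i k) + m (i k)) - (a (i (k - 1)) + m (i (k - 1)))) : ℕ) : ℝ)))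
        ≤ (∑ j ∈ Finset.Icc 1 K, (τ j + tstar j / (m j : ℝ)) * (m j : ℝ)) -
          τ K * ((∑ j ∈ Finset.Icc 1 K, (m j : ℝ)) - (L : ℝ)) := by
  obtain ⟨N, rfl⟩ : ∃ N, K = N + 1 := ⟨K - 1, by omega⟩
  have hS : ∀ k, ∑ j ∈ Finset.Icc 1 (k + 1), m j = (∑ j ∈ Finset.Icc 1 k, m j) + m (k + 1) :=
    fun k => Finset.sum_Icc_succ_top (by omega) _
  rw [Nat.add_sub_cancel] at hsum'
  have hmK := hm (N + 1) (by omega) le_rfl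
  have he : ∀ k, k ≤ N → a k + m k = (∑ j ∈ Finset.Icc 1 k, m j) + 1 := by
    intro k hk
    rcases k with _ | k
    · simp [ha0, hm0]
    · rw [ha (k + 1) (by omega) (by omega), hS, Nat.add_sub_cancel]
      ring
  have heK : a (N + 1) + m (N + 1) = L + 1 := by omega
  have hSN := hS N
  refine ⟨N + 1, fun k => k, rfl, rfl, fun k h1 h2 => ⟨h1, h2⟩, ?_, ?_⟩
  · intro k h1 h2
    obtain ⟨k, rfl⟩ : ∃ l, k = l + 1 := ⟨k - 1, by omega⟩
    simp only [Nat.add_sub_cancel]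
    rcases lt_trichotomy k N with h | rfl | h
    · have e1 := he k h.le
      have e2 := he (k + 1) h
      have e3 := hS k
      have e4 := hm (k + 1) (by omega) (by omega)
      omega
    · have e1 := he k le_rfl
      omega
    · obtain rfl : k = N + 1 := by omega
      omega
  · rw [Finset.sum_Icc_succ_top (by omega), Finset.sum_Icc_succ_top (by omega),
      Finset.sum_Icc_succ_top (by omega)]
    -- The amortized time times the number of hosted blocks; `m j ≥ 1` rules out division by zero.
    have hamort : ∀ j, 1 ≤ j → j ≤ N + 1 →
        (τ j + tstar j / (m j : ℝ)) * (m j : ℝ) = τ j * m j + tstar j := by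
      intro j h1 h2
      have hj : (m j : ℝ) ≠ 0 := by
        have := (hm j h1 h2).1
        exact_mod_cast (by omega : m j ≠ 0)
      field_simp
    have hle : ∑ k ∈ Finset.Icc 1 N, (tc k + τ k *
          ((((a k + m k) - (a (k - 1) + m (k - 1))) : ℕ) : ℝ))
        ≤ ∑ j ∈ Finset.Icc 1 N, (τ j + tstar j / (m j : ℝ)) * (m j : ℝ) := by
      refine Finset.sum_le_sum fun k hk => ?_
      obtain ⟨h1, h2⟩ := Finset.mem_Icc.mp hk
      rw [hamort k h1 (by omega)]
      obtain ⟨k, rfl⟩ : ∃ l, k = l + 1 := ⟨k - 1, by omega⟩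
      have hd : (a (k + 1) + m (k + 1)) - (a (k + 1 - 1) + m (k + 1 - 1)) = m (k + 1) := by
        rw [he _ h2, Nat.add_sub_cancel, he k (by omega), hS]
        omega
      rw [hd]
      linarith [(htc (k + 1) h1 (by omega)).2]
    have hd : (a (N + 1) + m (N + 1)) - (a (N + 1 - 1) + m (N + 1 - 1))
        = L - ∑ j ∈ Finset.Icc 1 N, m j := by
      rw [heK, Nat.add_sub_cancel, he N le_rfl]
      omega
    rw [hd, Nat.cast_sub hsum'.le, Nat.cast_sum, hamort (N + 1) hK le_rfl]
    linarith [(htc (N + 1) hK le_rfl).2]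
end

section
/- (Lower bound on the minimum per-token inference time.) Let n, L ≥ 1, and for j = 1, …, n let \overline m_j ≥ 1 be natural numbers with Σ_{j=1}^n \overline m_j ≥ L, and let t_{cj} ≥ 0 and τ_j ≥ 0 be reals. Define \tilde t_{j,c} := τ_j + t_{cj}/\overline m_j and assume the servers are indexed so that \tilde t_{1,c} ≤ ⋯ ≤ \tilde t_{n,c}. Let K_c := min{K : Σ_{k=1}^K \overline m_k ≥ L} and T^o_c := Σ_{k=1}^{K_c−1} \tilde t_{k,c} \overline m_k + \tilde t_{K_c,c} (L − Σ_{k=1}^{K_c−1} \overline m_k). Then for every function k : {1, …, n} → ℕ with Σ_{j=1}^n k_j = L and k_j ≤ \overline m_j for all j, one has Σ_{j : k_j ≥ 1} (t_{cj} + τ_j k_j) ≥ T^o_c; i.e., the per-token inference time of any server chain in which server j processes k_j blocks is at least T^o_c. -/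
/-!
Write `a j = τ j + tc j / mbar j`. Since `k j ≤ mbar j`, a server processing `k j` blocks costs
at least `a j * k j`, so the chain costs at least `∑ a j * k j`. Bounding this below is a
fractional knapsack problem, solved by an exchange argument around the threshold price
`A = a Kc`: since `∑ k j = L`, the chain cost is at least `A * L + ∑ (a j - A) * k j`, while
the greedy value is `A * L + ∑_{j < Kc} (a j - A) * mbar j`. The coefficient `a j - A` is
nonpositive before `Kc`, where `k j ≤ mbar j`, and nonnegative after it.
-/

/-- Lemma 4: lower bound on the minimum per-token inference time.
Servers `1, …, n` can host at most `mbar j ≥ 1` blocks, `∑_{j=1}^n mbar j ≥ L` (`n, L ≥ 1`),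
with RTTs `tc j ≥ 0` and processing times `τ j ≥ 0`. The minimum amortized inference times
`t̃ j = τ j + tc j / mbar j` are sorted increasingly, `K_c = min {K : ∑_{k=1}^K mbar k ≥ L}`
(characterized by `hKc1`, `hKc2`), and
`T^o_c = ∑_{k=1}^{K_c-1} t̃ k * mbar k + t̃ K_c * (L - ∑_{k<K_c} mbar k)`. Then for every
`k : {1, …, n} → ℕ` with `∑ k j = L` and `k j ≤ mbar j`, the per-token inference time of the
corresponding server chain satisfies `∑_{j : k j ≥ 1} (tc j + τ j * k j) ≥ T^o_c`. -/
theorem stmt9 (n L Kc : ℕ) (hn : 1 ≤ n) (hL : 1 ≤ L)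
    (mbar : ℕ → ℕ) (tc τ : ℕ → ℝ)
    (hmbar : ∀ j, 1 ≤ j → j ≤ n → 1 ≤ mbar j)
    (htot : L ≤ ∑ j ∈ Finset.Icc 1 n, mbar j)
    (htc : ∀ j, 1 ≤ j → j ≤ n → 0 ≤ tc j)
    (hτ : ∀ j, 1 ≤ j → j ≤ n → 0 ≤ τ j)
    (hsorted : ∀ j j', 1 ≤ j → j ≤ j' → j' ≤ n →
      τ j + tc j / (mbar j : ℝ) ≤ τ j' + tc j' / (mbar j' : ℝ))
    (hKc1 : L ≤ ∑ k ∈ Finset.Icc 1 Kc, mbar k)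
    (hKc2 : ∀ k, k < Kc → ∑ j ∈ Finset.Icc 1 k, mbar j < L)
    (k : ℕ → ℕ)
    (hk : ∀ j, 1 ≤ j → j ≤ n → k j ≤ mbar j)
    (hksum : ∑ j ∈ Finset.Icc 1 n, k j = L) :
    (∑ j ∈ Finset.Icc 1 (Kc - 1), (τ j + tc j / (mbar j : ℝ)) * (mbar j : ℝ)) +
        (τ Kc + tc Kc / (mbar Kc : ℝ)) *
          ((L : ℝ) - ∑ j ∈ Finset.Icc 1 (Kc - 1), (mbar j : ℝ))
      ≤ ∑ j ∈ (Finset.Icc 1 n).filter (fun j => 1 ≤ k j),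
          (tc j + τ j * (k j : ℝ)) := by
  have hKn : Kc ≤ n := by
    by_contra! h
    exact absurd (hKc2 n h) (not_lt.mpr htot)
  have hK1 : 1 ≤ Kc := by
    rcases Nat.eq_zero_or_pos Kc with h | h
    · subst h
      simp at hKc1
      omega
    · exact h
  set a : ℕ → ℝ := fun j => τ j + tc j / (mbar j : ℝ) with ha
  have hcost : ∑ j ∈ Finset.Icc 1 n, a j * (k j : ℝ) ≤
      ∑ j ∈ (Finset.Icc 1 n).filter (fun j => 1 ≤ k j), (tc j + τ j * (k j : ℝ)) := by
    rw [Finset.sum_filter]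
    refine Finset.sum_le_sum fun j hj => ?_
    obtain ⟨h1, h2⟩ := Finset.mem_Icc.mp hj
    split_ifs with h
    · have hm : (0 : ℝ) < mbar j := by exact_mod_cast hmbar j h1 h2
      have hkm : (k j : ℝ) ≤ mbar j := by exact_mod_cast hk j h1 h2
      have h3 : tc j / (mbar j : ℝ) * k j ≤ tc j / (mbar j : ℝ) * mbar j :=
        mul_le_mul_of_nonneg_left hkm (div_nonneg (htc j h1 h2) hm.le)
      rw [div_mul_cancel₀ _ hm.ne'] at h3
      simp only [ha]
      linarith
    · have : k j = 0 := by omega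
      simp [this]
  have hbefore : ∑ j ∈ Finset.Icc 1 (Kc - 1), (a j - a Kc) * (mbar j : ℝ) ≤
      ∑ j ∈ Finset.Icc 1 (Kc - 1), (a j - a Kc) * (k j : ℝ) := by
    refine Finset.sum_le_sum fun j hj => ?_
    obtain ⟨h1, h2⟩ := Finset.mem_Icc.mp hj
    have hs : a j ≤ a Kc := hsorted j Kc h1 (by omega) hKn
    have hkm : (k j : ℝ) ≤ mbar j := by exact_mod_cast hk j h1 (by omega)
    exact mul_le_mul_of_nonpos_left hkm (by linarith)
  have hafter : ∑ j ∈ Finset.Icc 1 (Kc - 1), (a j - a Kc) * (k j : ℝ) ≤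
      ∑ j ∈ Finset.Icc 1 n, (a j - a Kc) * (k j : ℝ) := by
    refine Finset.sum_le_sum_of_subset_of_nonneg
      (Finset.Icc_subset_Icc le_rfl (by omega)) fun j hj hj' => ?_
    obtain ⟨h1, h2⟩ := Finset.mem_Icc.mp hj
    have h3 : Kc ≤ j := by
      by_contra! h
      exact hj' (Finset.mem_Icc.mpr ⟨h1, by omega⟩)
    have hs : a Kc ≤ a j := hsorted Kc j hK1 h3 h2
    exact mul_nonneg (by linarith) (Nat.cast_nonneg _)
  have hL' : ∑ j ∈ Finset.Icc 1 n, (k j : ℝ) = L := by exact_mod_cast hksum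
  simp only [sub_mul, Finset.sum_sub_distrib, ← Finset.mul_sum] at hbefore hafter
  rw [hL'] at hafter
  change (∑ j ∈ Finset.Icc 1 (Kc - 1), a j * (mbar j : ℝ)) +
    a Kc * ((L : ℝ) - ∑ j ∈ Finset.Icc 1 (Kc - 1), (mbar j : ℝ)) ≤ _
  rw [mul_sub]
  linarith
end

section
/- Let n ≥ 1 and L ≥ 1 be naturals, let s_m > 0 and s_c > 0 be reals, let M_1, …, M_n ≥ 0 be reals, and let R be a natural number satisfying R ≤ ⌊(Σ_{j=1}^n M_j − s_m (L + n)) / (s_c (L + n))⌋. Then Σ_{j=1}^n min(⌊M_j / (s_m + s_c R)⌋, L) ≥ L; i.e., the conservative greedy block placement that gives server j exactly min(⌊M_j/(s_m + s_c R)⌋, L) blocks places every one of the L blocks on at least one server. -/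
/-!
Write `c = sm + sc * R`. The bound on `R` says exactly that `∑ M j ≥ c * (L + n)`.
If some server has `⌊M j / c⌋ ≥ L`, its term alone contributes `L` and the others are
nonnegative. Otherwise the cap `L` is never active, and since each floor loses at most `1`,
the sum is at least `∑ M j / c - n ≥ L`.
-/

/-- feasibility of the conservative greedy block placement.
With `n ≥ 1` servers of memories `M j ≥ 0`, block size `sm > 0`, cache size `sc > 0`,
`L ≥ 1` blocks, and a target number `R` of concurrent requests satisfying
`R ≤ ⌊(∑_{j=1}^n M j - sm * (L + n)) / (sc * (L + n))⌋`, the conservative greedy block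
placement that gives server `j` exactly `min ⌊M j / (sm + sc * R)⌋ L` blocks places every
one of the `L` blocks on at least one server:
`∑_{j=1}^n min ⌊M j / (sm + sc * R)⌋ L ≥ L`. -/
theorem stmt11 (n L : ℕ) (hn : 1 ≤ n) (hL : 1 ≤ L)
    (sm sc : ℝ) (hsm : 0 < sm) (hsc : 0 < sc)
    (M : ℕ → ℝ) (hM : ∀ j, 1 ≤ j → j ≤ n → 0 ≤ M j)
    (R : ℕ)
    (hR : (R : ℤ) ≤
      ⌊((∑ j ∈ Finset.Icc 1 n, M j) - sm * ((L : ℝ) + (n : ℝ))) /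
        (sc * ((L : ℝ) + (n : ℝ)))⌋) :
    (L : ℤ) ≤ ∑ j ∈ Finset.Icc 1 n, min ⌊M j / (sm + sc * (R : ℝ))⌋ (L : ℤ) := by
  have hn' : (1 : ℝ) ≤ n := by exact_mod_cast hn
  have hD : (0 : ℝ) < (L : ℝ) + n := by positivity
  have hc : 0 < sm + sc * (R : ℝ) := by positivity
  have hsum : (sm + sc * (R : ℝ)) * ((L : ℝ) + n) ≤ ∑ j ∈ Finset.Icc 1 n, M j := by
    rw [Int.le_floor, le_div_iff₀ (by positivity)] at hR
    push_cast at hR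
    linarith
  by_cases h : ∃ j ∈ Finset.Icc 1 n, (L : ℤ) ≤ ⌊M j / (sm + sc * (R : ℝ))⌋
  · obtain ⟨j, hj, hLj⟩ := h
    calc (L : ℤ) = min ⌊M j / (sm + sc * (R : ℝ))⌋ (L : ℤ) := (min_eq_right hLj).symm
      _ ≤ _ := Finset.single_le_sum
        (f := fun j => min ⌊M j / (sm + sc * (R : ℝ))⌋ (L : ℤ)) (fun i hi => by
          rw [Finset.mem_Icc] at hi
          exact le_min (Int.floor_nonneg.2 (div_nonneg (hM i hi.1 hi.2) hc.le)) (by positivity)) hj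
  · push Not at h
    rw [Finset.sum_congr rfl fun j hj => min_eq_left (h j hj).le]
    have hfloor : ∑ j ∈ Finset.Icc 1 n, (M j / (sm + sc * (R : ℝ)) - 1) ≤
        ∑ j ∈ Finset.Icc 1 n, (⌊M j / (sm + sc * (R : ℝ))⌋ : ℝ) :=
      Finset.sum_le_sum fun j _ => (Int.sub_one_lt_floor _).le
    rw [Finset.sum_sub_distrib, ← Finset.sum_div] at hfloor
    have hdiv : (L : ℝ) + n ≤ (∑ j ∈ Finset.Icc 1 n, M j) / (sm + sc * (R : ℝ)) := by
      rw [le_div_iff₀ hc]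
      linarith
    simp only [Finset.sum_const, Nat.card_Icc, add_tsub_cancel_right, nsmul_eq_mul,
      mul_one] at hfloor
    have : (L : ℝ) ≤ ∑ j ∈ Finset.Icc 1 n, (⌊M j / (sm + sc * (R : ℝ))⌋ : ℝ) := by linarith
    exact_mod_cast this
end

section
/- (Key value claim in the NP-hardness reduction.) Let N ≥ 1, let w : {1, …, N} → ℕ with w_i ≥ 1 for all i, let S ⊆ {1, …, N}, and let Δ, ε be naturals with Σ_{i ∈ S} w_i = Δ + ε and Σ_{i ∉ S} w_i = Δ − ε (so ε ≤ Δ). Consider the BPRR instance with L = 2 blocks and Δ requests in which block 1 is placed on the servers {i : i ∈ S} (server i serving at most w_i requests at per-request cost 1 for each block it processes) and block 2 is placed on the servers {i : i ∉ S} together with an extra server 0 of capacity Δ and per-request cost 2: each request must be assigned one block-1 server and one block-2 server, with the number of requests assigned to any server not exceeding its capacity, and the total cost is the sum over the Δ requests of the costs of their two assigned servers. Then the minimum total cost over all such capacity-respecting assignments equals 2Δ + ε. -/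
/-! Servers in `S` and in `{1, …, N} \ S` all cost `1` per block, so every feasible assignment costs
`2 * Δ` plus the number of requests sent to server `0` (`cost_eq`). The servers in
`{1, …, N} \ S` together serve at most `Δ - ε` requests, so at least `ε` requests use server `0`.
Equality is attained because a set of requests no larger than the total capacity of a set
of servers can always be assigned to these servers (`exists_assignment`): assign all `Δ` requests
within `S` for block 1 and the first `Δ - ε` requests within the complement of `S` for block 2,
sending the last `ε` requests to server `0`. -/

/-- A set of requests `R` no larger than the total capacity of the servers in `T` can be
assigned to `T` within capacities: inject `R` into the set of pairs `(i, slot)` with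
`slot < w i`, and forget the slot. -/
theorem exists_assignment (w : ℕ → ℕ) (T R : Finset ℕ) (h : R.card ≤ ∑ i ∈ T, w i) :
    ∃ f : ℕ → ℕ, (∀ r ∈ R, f r ∈ T) ∧ ∀ i ∈ T, (R.filter (fun r => f r = i)).card ≤ w i := by
  have hcard : Fintype.card R ≤ Fintype.card (T.sigma fun i => Finset.range (w i)) := by
    simpa [Finset.card_sigma] using h
  obtain ⟨e⟩ := Function.Embedding.nonempty_of_card_le hcard
  let g : ℕ → (Σ _ : ℕ, ℕ) := fun r => if hr : r ∈ R then (e ⟨r, hr⟩).1 else ⟨0, 0⟩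
  have hg : ∀ r ∈ R, g r ∈ T.sigma fun i => Finset.range (w i) := by
    intro r hr
    simp only [g, dif_pos hr]
    exact (e ⟨r, hr⟩).2
  have hinj : ∀ r ∈ R, ∀ s ∈ R, g r = g s → r = s := by
    intro r hr s hs hrs
    simp only [g, dif_pos hr, dif_pos hs] at hrs
    exact congrArg Subtype.val (e.injective (Subtype.ext hrs))
  refine ⟨fun r => (g r).1, fun r hr => (Finset.mem_sigma.1 (hg r hr)).1, fun i _ => ?_⟩
  rw [← Finset.card_range (w i)]
  refine Finset.card_le_card_of_injOn (fun r => (g r).2) ?_ ?_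
  · intro r hr
    obtain ⟨hrR, rfl⟩ := Finset.mem_filter.1 hr
    exact (Finset.mem_sigma.1 (hg r hrR)).2
  · intro r hr s hs hrs
    obtain ⟨hr, hri⟩ := Finset.mem_filter.1 hr
    obtain ⟨hs, hsi⟩ := Finset.mem_filter.1 hs
    exact hinj r hr s hs (Sigma.ext (hri.trans hsi.symm) (heq_of_eq hrs))

theorem cost_eq (Δ : ℕ) (σ₁ σ₂ : ℕ → ℕ) (h : ∀ r ∈ Finset.Icc 1 Δ, σ₁ r ≠ 0) :
    ∑ r ∈ Finset.Icc 1 Δ, ((if σ₁ r = 0 then 2 else 1) + (if σ₂ r = 0 then 2 else 1)) =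
      2 * Δ + ((Finset.Icc 1 Δ).filter (fun r => σ₂ r = 0)).card := by
  have hterm : ∀ r ∈ Finset.Icc 1 Δ,
      ((if σ₁ r = 0 then 2 else 1) + (if σ₂ r = 0 then 2 else 1)) =
        2 + (if σ₂ r = 0 then 1 else 0) := by
    intro r hr
    rw [if_neg (h r hr)]
    split_ifs <;> rfl
  rw [Finset.sum_congr rfl hterm, Finset.sum_add_distrib, Finset.card_filter]
  simp [mul_comm]

/-- key value claim in the NP-hardness reduction.
Positive integers `w 1, …, w N` are split by `S ⊆ {1, …, N}` into parts of sums `Δ + ε`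
and `Δ - ε` (with `ε ≤ Δ`). In the BPRR instance with `L = 2` blocks and `Δ` requests,
block `1` is hosted by the servers in `S` (server `i` serving at most `w i` requests at
cost `1` per block) and block `2` by the servers in `{1, …, N} \ S` (cost `1`) together
with the extra server `0` of capacity `Δ` and cost `2`. Each request is assigned one
block-1 server and one block-2 server respecting capacities; the total cost is the sum
over the `Δ` requests of the costs of their two servers. The minimum total cost over all
such capacity-respecting assignments equals `2 * Δ + ε`. -/
theorem stmt16 (N Δ ε : ℕ) (hN : 1 ≤ N)
    (w : ℕ → ℕ) (hw : ∀ i, 1 ≤ i → i ≤ N → 1 ≤ w i)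
    (S : Finset ℕ) (hS : S ⊆ Finset.Icc 1 N)
    (hεΔ : ε ≤ Δ)
    (hS1 : ∑ i ∈ S, w i = Δ + ε)
    (hS2 : ∑ i ∈ Finset.Icc 1 N \ S, w i = Δ - ε) :
    IsLeast {x : ℕ | ∃ σ₁ σ₂ : ℕ → ℕ,
        (∀ r, 1 ≤ r → r ≤ Δ → σ₁ r ∈ S) ∧
        (∀ r, 1 ≤ r → r ≤ Δ → σ₂ r = 0 ∨ σ₂ r ∈ Finset.Icc 1 N \ S) ∧
        (∀ i ∈ S, ((Finset.Icc 1 Δ).filter (fun r => σ₁ r = i)).card ≤ w i) ∧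
        (∀ i ∈ Finset.Icc 1 N \ S,
          ((Finset.Icc 1 Δ).filter (fun r => σ₂ r = i)).card ≤ w i) ∧
        ((Finset.Icc 1 Δ).filter (fun r => σ₂ r = 0)).card ≤ Δ ∧
        x = ∑ r ∈ Finset.Icc 1 Δ,
          ((if σ₁ r = 0 then 2 else 1) + (if σ₂ r = 0 then 2 else 1))}
      (2 * Δ + ε) := by
  have hS0 : ∀ i ∈ S, i ≠ 0 := by
    intro i hi
    have := Finset.mem_Icc.1 (hS hi)
    omega
  have hC0 : ∀ i ∈ Finset.Icc 1 N \ S, i ≠ 0 := by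
    intro i hi
    have := Finset.mem_Icc.1 (Finset.mem_sdiff.1 hi).1
    omega
  constructor
  · obtain ⟨f, hfS, hfw⟩ := exists_assignment w S (Finset.Icc 1 Δ) (by simp [hS1])
    obtain ⟨g, hgC, hgw⟩ := exists_assignment w (Finset.Icc 1 N \ S) (Finset.Icc 1 (Δ - ε))
      (by simp [hS2])
    have hzero : (Finset.Icc 1 Δ).filter (fun r => (if r ≤ Δ - ε then g r else 0) = 0) =
        Finset.Icc (Δ - ε + 1) Δ := by
      ext r
      simp only [Finset.mem_filter, Finset.mem_Icc]
      constructor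
      · rintro ⟨hr, h0⟩
        refine ⟨?_, hr.2⟩
        by_contra hlt
        rw [if_pos (by omega)] at h0
        exact hC0 _ (hgC r (Finset.mem_Icc.2 (by omega))) h0
      · intro hr
        exact ⟨by omega, if_neg (by omega)⟩
    refine ⟨f, fun r => if r ≤ Δ - ε then g r else 0,
      fun r h1 h2 => hfS r (Finset.mem_Icc.2 ⟨h1, h2⟩), ?_, hfw, ?_, ?_, ?_⟩
    · intro r h1 _
      by_cases hr : r ≤ Δ - ε
      · right
        simpa only [if_pos hr] using hgC r (Finset.mem_Icc.2 ⟨h1, hr⟩)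
      · left
        exact if_neg hr
    · intro i hi
      refine (Finset.card_le_card ?_).trans (hgw i hi)
      intro r hr
      obtain ⟨hr, hri⟩ := Finset.mem_filter.1 hr
      dsimp only at hri
      have hle : r ≤ Δ - ε := by
        by_contra hlt
        rw [if_neg hlt] at hri
        exact hC0 i hi hri.symm
      rw [if_pos hle] at hri
      exact Finset.mem_filter.2 ⟨Finset.mem_Icc.2 ⟨(Finset.mem_Icc.1 hr).1, hle⟩, hri⟩
    · exact (Finset.card_filter_le _ _).trans (by simp)
    · rw [cost_eq Δ f _ (fun r hr => hS0 _ (hfS r hr)), hzero, Nat.card_Icc]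
      omega
  · rintro x ⟨σ₁, σ₂, h₁, h₂, -, hw₂, -, rfl⟩
    rw [cost_eq Δ σ₁ σ₂ fun r hr =>
      hS0 _ (h₁ r (Finset.mem_Icc.1 hr).1 (Finset.mem_Icc.1 hr).2)]
    have hle : ((Finset.Icc 1 Δ).filter (fun r => ¬ σ₂ r = 0)).card ≤ Δ - ε := by
      rw [← hS2, Finset.card_eq_sum_card_fiberwise (f := σ₂) (t := Finset.Icc 1 N \ S)]
      · refine Finset.sum_le_sum fun i hi => (Finset.card_le_card ?_).trans (hw₂ i hi)
        exact Finset.filter_subset_filter _ (Finset.filter_subset _ _)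
      · intro r hr
        obtain ⟨hr, h0⟩ := Finset.mem_filter.1 hr
        exact (h₂ r (Finset.mem_Icc.1 hr).1 (Finset.mem_Icc.1 hr).2).resolve_left h0
    have hsum := Finset.card_filter_add_card_filter_not (s := Finset.Icc 1 Δ) (fun r => σ₂ r = 0)
    rw [Nat.card_Icc] at hsum
    omega
end
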